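/- arXiv:2210.10613 — 2 statements merged into one kernel-verified Lean document; each statement's English description precedes it below -/
import Mathlib

section
/- Let lb < hb be real numbers and m a positive natural number. Let x, y : Fin m → ℝ be monotone (non-decreasing) tuples with lb ≤ x i ≤ hb and lb ≤ y i ≤ hb for all i. If for every natural number k with 0 ≤ k ≤ m we have ∑_{i} ((x i − lb)/(hb − lb))^k = ∑_{i} ((y i − lb)/(hb − lb))^k, then x = y. In other words, the sum-of-power mapping E(x) = [∑_i ((x_i−lb)/(hb−lb))^0, …, ∑_i ((x_i−lb)/(hb−lb))^m] is injective on the set of non-decreasing m-tuples with entries in [lb, hb]. -/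
/-!
Newton's identities express `k * eₖ` through `e₀, …, eₖ₋₁` and the power sums `p₁, …, pₖ`. As `k`
can be cancelled, the first `m` power sums of `m` numbers determine their elementary symmetric
functions, hence, by Vieta's formulas, the monic polynomial with these numbers as roots, hence the
numbers up to order. Monotonicity then fixes the order.
-/

open Finset.HasAntidiagonal (antidiagonal)

section CommRing

variable {R : Type*} [CommRing R]

theorem multiset_mul_esymm_eq_sum (s : Multiset R) (k : ℕ) :
    k * s.esymm k = (-1) ^ (k + 1) *
      ∑ a ∈ antidiagonal k with a.1 < k,
        (-1) ^ a.1 * s.esymm a.1 * (s.map (· ^ a.2)).sum := by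
  obtain ⟨n, f, rfl⟩ : ∃ (n : ℕ) (f : Fin n → R), s = Finset.univ.val.map f := by
    induction s using Quotient.inductionOn with
    | _ l => exact ⟨l.length, l.get, by simp [Fin.univ_val_map]⟩
  simpa [MvPolynomial.psum, ← MvPolynomial.aeval_esymm_eq_multiset_esymm (Fin n) R,
    -Fin.univ_val_map] using
    congrArg (MvPolynomial.aeval f) (MvPolynomial.mul_esymm_eq_sum (Fin n) R k)

theorem esymm_eq_of_sum_map_pow_eq [IsAddTorsionFree R] {s t : Multiset R} {n : ℕ}
    (h : ∀ k, 0 < k → k ≤ n → (s.map (· ^ k)).sum = (t.map (· ^ k)).sum) {k : ℕ} (hk : k ≤ n) :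
    s.esymm k = t.esymm k := by
  induction k using Nat.strong_induction_on with
  | _ k ih =>
    obtain rfl | hpos := k.eq_zero_or_pos
    · simp [Multiset.esymm]
    apply nsmul_right_injective hpos.ne'
    simp only [nsmul_eq_mul, multiset_mul_esymm_eq_sum]
    congr 1
    refine Finset.sum_congr rfl fun a ha ↦ ?_
    obtain ⟨hsum, hlt⟩ : a.1 + a.2 = k ∧ a.1 < k := by simpa using ha
    rw [ih a.1 hlt (by lia), h a.2 (by lia) (by lia)]

variable [IsDomain R] {s t : Multiset R}

theorem multiset_eq_of_esymm_eq (hcard : s.card = t.card)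
    (h : ∀ k ≤ s.card, s.esymm k = t.esymm k) : s = t := by
  have hprod : (s.map fun a ↦ Polynomial.X - Polynomial.C a).prod =
      (t.map fun a ↦ Polynomial.X - Polynomial.C a).prod := by
    rw [Multiset.prod_X_sub_X_eq_sum_esymm, Multiset.prod_X_sub_X_eq_sum_esymm, ← hcard]
    refine Finset.sum_congr rfl fun k hk ↦ ?_
    rw [h k (Finset.mem_range_succ_iff.mp hk)]
  simpa only [Polynomial.roots_multiset_prod_X_sub_C] using congrArg Polynomial.roots hprod

theorem multiset_eq_of_sum_map_pow_eq [CharZero R] (hcard : s.card = t.card)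
    (h : ∀ k, 0 < k → k ≤ s.card → (s.map (· ^ k)).sum = (t.map (· ^ k)).sum) : s = t :=
  multiset_eq_of_esymm_eq hcard fun _ ↦ esymm_eq_of_sum_map_pow_eq h

end CommRing

theorem eq_of_monotone_of_map_univ_eq {α : Type*} [PartialOrder α] {m : ℕ} {u v : Fin m → α}
    (hu : Monotone u) (hv : Monotone v)
    (h : Finset.univ.val.map u = Finset.univ.val.map v) : u = v := by
  rw [Fin.univ_val_map, Fin.univ_val_map, Multiset.coe_eq_coe] at h
  exact List.ofFn_injective
    (h.eq_of_pairwise' hu.sortedLE_ofFn.pairwise hv.sortedLE_ofFn.pairwise)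

theorem sum_of_power_mapping_injective_general {K : Type*} [Field K] [CharZero K] [PartialOrder K]
    {lb hb : K} (hne : lb ≠ hb) {m : ℕ} {x y : Fin m → K} (hx : Monotone x) (hy : Monotone y)
    (h : ∀ k, 0 < k → k ≤ m →
      ∑ i, ((x i - lb) / (hb - lb)) ^ k = ∑ i, ((y i - lb) / (hb - lb)) ^ k) :
    x = y := by
  let normalize (a : K) : K := (a - lb) / (hb - lb)
  have normalize_injective : Function.Injective normalize :=
    fun _ _ hab ↦ sub_left_injective ((div_left_inj' (sub_ne_zero.mpr hne.symm)).mp hab)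
  have hmap : (Finset.univ.val.map x).map normalize = (Finset.univ.val.map y).map normalize :=
    multiset_eq_of_sum_map_pow_eq (by simp) (by simpa [normalize, -Fin.univ_val_map] using h)
  exact eq_of_monotone_of_map_univ_eq hx hy (Multiset.map_injective normalize_injective hmap)

/-- Lemma 1 (sum-of-power mapping): the normalized power-sum map is injective
on non-decreasing m-tuples with entries in [lb, hb]. -/
theorem sum_of_power_mapping_injective
    (lb hb : ℝ) (hlt : lb < hb) (m : ℕ) (hm : 0 < m)
    (x y : Fin m → ℝ) (hx : Monotone x) (hy : Monotone y)
    (hxmem : ∀ i, lb ≤ x i ∧ x i ≤ hb) (hymem : ∀ i, lb ≤ y i ∧ y i ≤ hb)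
    (h : ∀ k : ℕ, k ≤ m →
      ∑ i, ((x i - lb) / (hb - lb)) ^ k = ∑ i, ((y i - lb) / (hb - lb)) ^ k) :
    x = y :=
  sum_of_power_mapping_injective_general hlt.ne hx hy fun k _ hk ↦ h k hk
end

section
/- Let m and M be positive natural numbers and let s and t be multisets of vectors in ℝ^m (elements of Fin m → ℝ), each of cardinality M. Suppose that for every coordinate index i, the multiset of i-th coordinates of the members of s equals the multiset of i-th coordinates of the members of t. Then t can be obtained from s by a finite sequence of feature swaps, i.e., s and t are swap-equivalent. -/
/-- A feature swap on a multiset of vectors in ℝ^m: choose two members `u, v`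
and a coordinate `i`, and replace them by the vectors obtained from `u` and `v`
by exchanging their `i`-th coordinates. -/
def FeatureSwap (m : ℕ) (s t : Multiset (Fin m → ℝ)) : Prop :=
  ∃ (u v : Fin m → ℝ) (i : Fin m) (r : Multiset (Fin m → ℝ)),
    s = u ::ₘ v ::ₘ r ∧
    t = (Function.update u i (v i)) ::ₘ (Function.update v i (u i)) ::ₘ r

/-!
The multisets of coordinates are invariant under swaps. Conversely, let `w` be a member of `t`.
Every coordinate of `w` occurs in `s`, so starting from any member `u` of `s` the coordinates of `w`
can be swapped into `u` one at a time, until `u` has become `w`. Cancelling `w` on both sides leaves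
multisets that still have equal multisets of coordinates, and induction on `t` concludes.
-/

section SwapEquivalence

variable {ι : Type*} [DecidableEq ι] {α : ι → Type*}

/-- A feature swap on a multiset of tuples whose `i`-th coordinate ranges over an arbitrary type
`α i`; `r` collects the members that are left alone. -/
inductive CoordSwap : Multiset (∀ i, α i) → Multiset (∀ i, α i) → Prop
  | swap (u v : ∀ i, α i) (i : ι) (r : Multiset (∀ i, α i)) :
      CoordSwap (u ::ₘ v ::ₘ r)
        (Function.update u i (v i) ::ₘ Function.update v i (u i) ::ₘ r)

/-- Swap-equivalence of multisets of tuples: reachability by finitely many feature swaps. -/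
abbrev SwapEquivalent (s t : Multiset (∀ i, α i)) : Prop :=
  Relation.ReflTransGen CoordSwap s t

namespace CoordSwap

variable {s t : Multiset (∀ i, α i)}

theorem card_eq (h : CoordSwap s t) : s.card = t.card := by
  cases h
  simp

theorem map_apply_eq (h : CoordSwap s t) (j : ι) :
    s.map (fun x => x j) = t.map (fun x => x j) := by
  obtain ⟨u, v, i, r⟩ := h
  obtain rfl | hji := eq_or_ne j i
  · simp [Multiset.cons_swap]
  · simp [hji]

theorem cons (w : ∀ i, α i) (h : CoordSwap s t) : CoordSwap (w ::ₘ s) (w ::ₘ t) := by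
  obtain ⟨u, v, i, r⟩ := h
  simpa only [Multiset.cons_swap w] using swap u v i (w ::ₘ r)

end CoordSwap

namespace SwapEquivalent

variable {s t : Multiset (∀ i, α i)}

theorem card_eq (h : SwapEquivalent s t) : s.card = t.card := by
  induction h with
  | refl => rfl
  | tail _ hswap ih => exact ih.trans hswap.card_eq

theorem map_apply_eq (h : SwapEquivalent s t) (i : ι) :
    s.map (fun x => x i) = t.map (fun x => x i) := by
  induction h with
  | refl => rfl
  | tail _ hswap ih => exact ih.trans (hswap.map_apply_eq i)

theorem cons (w : ∀ i, α i) (h : SwapEquivalent s t) : SwapEquivalent (w ::ₘ s) (w ::ₘ t) :=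
  h.lift (w ::ₘ ·) fun _ _ hswap => hswap.cons w

end SwapEquivalent

theorem exists_swapEquivalent_cons_update (u : ∀ i, α i) (r : Multiset (∀ i, α i)) {i : ι} {a : α i}
    (ha : a ∈ (u ::ₘ r).map (fun x => x i)) :
    ∃ r', SwapEquivalent (u ::ₘ r) (Function.update u i a ::ₘ r') := by
  obtain ⟨v, hv, rfl⟩ := Multiset.mem_map.1 ha
  obtain rfl | hvr := Multiset.mem_cons.1 hv
  · exact ⟨r, by rw [Function.update_eq_self]⟩
  · obtain ⟨r, rfl⟩ := Multiset.exists_cons_of_mem hvr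
    exact ⟨_, .single (.swap u v i r)⟩

theorem exists_swapEquivalent_cons_piecewise (w u : ∀ i, α i) (r : Multiset (∀ i, α i))
    (I : Finset ι) (hw : ∀ i ∈ I, w i ∈ (u ::ₘ r).map (fun x => x i)) :
    ∃ r', SwapEquivalent (u ::ₘ r) (I.piecewise w u ::ₘ r') := by
  induction I using Finset.induction_on with
  | empty => exact ⟨r, by rw [Finset.piecewise_empty]⟩
  | insert i I _ ih =>
    obtain ⟨r₁, h₁⟩ := ih fun j hj => hw j (Finset.mem_insert_of_mem hj)
    have hwi : w i ∈ (I.piecewise w u ::ₘ r₁).map (fun x => x i) :=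
      h₁.map_apply_eq i ▸ hw i (Finset.mem_insert_self i I)
    obtain ⟨r₂, h₂⟩ := exists_swapEquivalent_cons_update _ r₁ hwi
    exact ⟨r₂, by rw [Finset.piecewise_insert]; exact h₁.trans h₂⟩

theorem exists_swapEquivalent_cons [Finite ι] {s : Multiset (∀ i, α i)} (hs : s ≠ 0)
    (w : ∀ i, α i) (hw : ∀ i, w i ∈ s.map (fun x => x i)) :
    ∃ r, SwapEquivalent s (w ::ₘ r) := by
  have := Fintype.ofFinite ι
  obtain ⟨u, hu⟩ := Multiset.exists_mem_of_ne_zero hs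
  obtain ⟨r, rfl⟩ := Multiset.exists_cons_of_mem hu
  simpa only [Finset.piecewise_univ] using
    exists_swapEquivalent_cons_piecewise w u r Finset.univ fun i _ => hw i

theorem swapEquivalent_of_coordinateMultisets_eq_general [Finite ι] (s t : Multiset (∀ i, α i))
    (hcard : s.card = t.card) (h : ∀ i, s.map (fun x => x i) = t.map (fun x => x i)) :
    SwapEquivalent s t := by
  induction t using Multiset.induction_on generalizing s with
  | empty =>
    obtain rfl : s = 0 := Multiset.card_eq_zero.1 hcard
    exact .refl
  | cons w t ih =>
    have hs : s ≠ 0 := by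
      rintro rfl
      simp at hcard
    have hw (i : ι) : w i ∈ s.map (fun x => x i) := by simp [h i]
    obtain ⟨r, hr⟩ := exists_swapEquivalent_cons hs w hw
    have hcard_r : r.card = t.card := by simpa using hr.card_eq.symm.trans hcard
    have hmap_r (i : ι) : r.map (fun x => x i) = t.map (fun x => x i) := by
      simpa using (hr.map_apply_eq i).symm.trans (h i)
    exact hr.trans ((ih r hcard_r hmap_r).cons w)

end SwapEquivalence

theorem CoordSwap.featureSwap {m : ℕ} {s t : Multiset (Fin m → ℝ)} (h : CoordSwap s t) :
    FeatureSwap m s t := by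
  obtain ⟨u, v, i, r⟩ := h
  exact ⟨u, v, i, r, rfl, rfl⟩

/-- If two multisets of M vectors in ℝ^m have, for every coordinate, the same
multiset of that coordinate's values, then one can be obtained from the other
by a finite sequence of feature swaps. -/
theorem swapEquivalent_of_coordinateMultisets_eq
    (m M : ℕ) (hm : 0 < m) (hM : 0 < M)
    (s t : Multiset (Fin m → ℝ))
    (hsc : Multiset.card s = M) (htc : Multiset.card t = M)
    (h : ∀ i : Fin m, s.map (fun x => x i) = t.map (fun x => x i)) :
    Relation.ReflTransGen (FeatureSwap m) s t :=
  Relation.ReflTransGen.mono (fun _ _ => CoordSwap.featureSwap) _ _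
    (swapEquivalent_of_coordinateMultisets_eq_general s t (hsc.trans htc.symm) h)
end
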